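/- Let F_θ(x) = e^{γθ}·x^{θ-1}·Γ(θ)·p_θ(1/x) for x ∈ (0,1] be the distribution function of the limiting longest-cycle fraction L^{(∞)}, where γ is the Euler–Mascheroni constant. Then C_δ := θ·∫_δ^1 (1−x)^{θ-1}·P(L^{(∞)} ≤ x/(1−x))·dx/x equals 1 − Γ(θ)e^{γθ}·δ^{θ-1}·p_θ(1/δ), for 0 < δ < 1. -/

import Mathlib

open MeasureTheory ProbabilityTheory Filter Set

/-- A real power series vanishing on `(0, 1/2)` has vanishing coefficients. -/
theorem coeff_eq_zero_of_hasSum_zero {c : ℕ → ℝ}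
    (h : ∀ z ∈ Ioo (0 : ℝ) (1 / 2), HasSum (fun k => z ^ k * c k) 0) : c = 0 := by
  have hsum : ∀ z ∈ Ioo (-(1 / 2) : ℝ) (1 / 2), Summable fun k => z ^ k * c k := by
    intro z hz
    rcases eq_or_ne z 0 with rfl | hz0
    · refine summable_of_ne_finset_zero (s := {0}) fun k hk => ?_
      rw [zero_pow (by simpa using hk), zero_mul]
    · have := (h |z| ⟨abs_pos.2 hz0, abs_lt.2 hz⟩).summable.abs
      refine Summable.of_abs (this.congr fun k => ?_)
      simp [abs_mul]
  have hf : HasFPowerSeriesAt (fun z => ∑' k, z ^ k * c k)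
      (FormalMultilinearSeries.ofScalars ℝ c) 0 := by
    rw [hasFPowerSeriesAt_iff]
    filter_upwards [Ioo_mem_nhds (by norm_num : (-(1 / 2) : ℝ) < 0) (by norm_num : (0 : ℝ) < 1 / 2)]
      with z hz
    simpa [FormalMultilinearSeries.coeff_ofScalars] using (hsum z hz).hasSum
  have hfreq : ∃ᶠ z in nhdsWithin (0 : ℝ) {0}ᶜ, (∑' k, z ^ k * c k) = 0 := by
    have : ∀ᶠ z in nhdsWithin (0 : ℝ) (Ioi 0), (∑' k, z ^ k * c k) = 0 := by
      filter_upwards [Ioo_mem_nhdsGT (by norm_num : (0 : ℝ) < 1 / 2)] with z hz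
      exact (h z hz).tsum_eq
    exact this.frequently.filter_mono (nhdsWithin_mono _ fun x hx => ne_of_gt hx)
  have h0 := hf.eq_zero_of_eventually (hf.analyticAt.frequently_zero_iff_eventually_zero.1 hfreq)
  exact (FormalMultilinearSeries.ofScalars_series_eq_zero (E := ℝ)).1 h0

theorem hasDerivAt_tsum_pow_mul {P : ℕ → ℝ} (hP : ∀ k, |P k| ≤ 1) {z : ℝ}
    (hz : z ∈ Ioo (-(1 / 2) : ℝ) (1 / 2)) :
    (Summable fun k : ℕ => k * z ^ (k - 1) * P k) ∧
    HasDerivAt (fun z : ℝ => ∑' k : ℕ, z ^ k * P k) (∑' k : ℕ, k * z ^ (k - 1) * P k) z := by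
  have hu : Summable fun k : ℕ => (k : ℝ) * (1 / 2) ^ (k - 1) := by
    have := (summable_pow_mul_geometric_of_norm_lt_one 1 (r := (1 / 2 : ℝ)) (by norm_num)).mul_left 2
    refine this.congr fun k => ?_
    rcases k with _ | k
    · simp
    · simp only [Nat.add_sub_cancel]
      ring
  have hb : ∀ k : ℕ, ∀ y ∈ Ioo (-(1 / 2) : ℝ) (1 / 2),
      ‖(k : ℝ) * y ^ (k - 1) * P k‖ ≤ k * (1 / 2) ^ (k - 1) := by
    intro k y hy
    rw [Real.norm_eq_abs, abs_mul, abs_mul, abs_pow, Nat.abs_cast]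
    have : |y| ^ (k - 1) ≤ (1 / 2) ^ (k - 1) :=
      pow_le_pow_left₀ (abs_nonneg _) (abs_lt.2 hy).le _
    calc _ ≤ (k : ℝ) * (1 / 2) ^ (k - 1) * 1 := by gcongr; exact hP k
      _ = _ := mul_one _
  refine ⟨Summable.of_norm_bounded hu fun k => hb k z hz, ?_⟩
  refine hasDerivAt_tsum_of_isPreconnected (t := Ioo (-(1 / 2) : ℝ) (1 / 2)) (y₀ := 0) hu isOpen_Ioo
    isPreconnected_Ioo (fun k y _ => (hasDerivAt_pow k y).mul_const _) hb (by norm_num)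
    ?_ hz
  refine summable_of_ne_finset_zero (s := {0}) fun k hk => ?_
  rw [zero_pow (by simpa using hk), zero_mul]

/-- The recursion for the coefficients of the generating function
`exp (θ * ∑ j ≤ n, (z ^ j - 1) / j)`. -/
theorem pgf_recurrence {θ : ℝ} {P : ℕ → ℝ} (hP : ∀ k, |P k| ≤ 1) {n : ℕ}
    (h : ∀ z ∈ Ioc (0 : ℝ) 1, ∑' k : ℕ, z ^ k * P k
        = ∏ j ∈ Finset.Icc 1 n, Real.exp ((θ / j) * (z ^ j - 1))) :
    P 0 = Real.exp (-(θ * harmonic n)) ∧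
    ∀ k : ℕ, (k + 1) * P (k + 1) = (k + θ) * P k - θ * (if n ≤ k then P (k - n) else 0) := by
  set E : ℝ → ℝ := fun z => Real.exp (∑ j ∈ Finset.Icc 1 n, (θ / j) * (z ^ j - 1)) with hE
  have hGE : ∀ z ∈ Ioc (0 : ℝ) 1, ∑' k : ℕ, z ^ k * P k = E z := by
    intro z hz
    simp only [h z hz, hE, Real.exp_sum]
  constructor
  · have hG0 := (hasDerivAt_tsum_pow_mul hP (z := 0) (by norm_num)).2.continuousAt
    have hc : Continuous E := by fun_prop
    have h1 : Tendsto E (nhdsWithin 0 (Ioi 0)) (nhds (∑' k : ℕ, (0 : ℝ) ^ k * P k)) := by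
      refine (hG0.tendsto.mono_left nhdsWithin_le_nhds).congr' ?_
      filter_upwards [Ioc_mem_nhdsGT (zero_lt_one' ℝ)] with z hz using hGE z hz
    have h2 := tendsto_nhds_unique h1 ((hc.tendsto 0).mono_left nhdsWithin_le_nhds)
    rw [tsum_eq_single 0 (fun k hk => by rw [zero_pow hk, zero_mul])] at h2
    rw [pow_zero, one_mul] at h2
    rw [h2, hE, harmonic_eq_sum_Icc]
    push_cast
    rw [Finset.mul_sum, ← Finset.sum_neg_distrib]
    congr 1
    refine Finset.sum_congr rfl fun j hj => ?_
    rw [zero_pow (by have := Finset.mem_Icc.1 hj; omega)]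
    ring
  · suffices hc : (fun k : ℕ => (k + 1) * P (k + 1) - k * P k - θ * P k +
        θ * (if n ≤ k then P (k - n) else 0)) = 0 by
      intro k
      have := congrFun hc k
      simp only [Pi.zero_apply] at this
      linarith
    refine coeff_eq_zero_of_hasSum_zero fun z hz => ?_
    have hz' : z ∈ Ioo (-(1 / 2) : ℝ) (1 / 2) := ⟨by linarith [hz.1], hz.2⟩
    obtain ⟨hs, hd⟩ := hasDerivAt_tsum_pow_mul hP hz'
    have hGs : Summable fun k : ℕ => z ^ k * P k := by
      refine Summable.of_norm_bounded (summable_geometric_of_lt_one hz.1.le (by linarith [hz.2]))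
        fun k => ?_
      rw [norm_mul, norm_pow, Real.norm_of_nonneg hz.1.le]
      exact mul_le_of_le_one_right (pow_nonneg hz.1.le _) (hP k)
    set D := ∑' k : ℕ, k * z ^ (k - 1) * P k with hD
    have hE' : HasDerivAt E (E z * ∑ j ∈ Finset.Icc 1 n, θ * z ^ (j - 1)) z := by
      refine HasDerivAt.exp (HasDerivAt.fun_sum fun j hj => ?_)
      have hj0 : (j : ℝ) ≠ 0 := by
        have := Finset.mem_Icc.1 hj
        exact Nat.cast_ne_zero.2 (by omega)
      convert! ((hasDerivAt_pow j z).sub_const 1).const_mul (θ / j) using 1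
      field_simp
    have hDE : D = E z * ∑ j ∈ Finset.Icc 1 n, θ * z ^ (j - 1) := by
      refine hd.unique (hE'.congr_of_eventuallyEq ?_)
      filter_upwards [Ioo_mem_nhds hz.1 hz.2] with y hy
      exact hGE y ⟨hy.1, by linarith [hy.2]⟩
    have hgeom : (1 - z) * ∑ j ∈ Finset.Icc 1 n, θ * z ^ (j - 1) = θ * (1 - z ^ n) := by
      rw [← mul_neg_geom_sum, Finset.range_eq_Ico, ← Finset.mul_sum, Finset.sum_Ico_eq_sum_range,
        ← Finset.Ico_succ_right_eq_Icc, Finset.sum_Ico_eq_sum_range]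
      simp
      ring
    have hGz := hGE z ⟨hz.1, by linarith [hz.2]⟩
    have hode : D - z * D - θ * E z + θ * (z ^ n * E z) = 0 := by
      linear_combination (1 - z) * hDE + E z * hgeom
    have s1 : HasSum (fun k : ℕ => z ^ k * ((k + 1) * P (k + 1))) D := by
      have := (hasSum_nat_add_iff' 1).2 hs.hasSum
      simp only [Finset.range_one, Finset.sum_singleton, Nat.cast_zero, zero_mul, sub_zero,
        Nat.add_sub_cancel] at this
      refine this.congr_fun ?_
      intro k
      push_cast
      ring
    have s2 : HasSum (fun k : ℕ => z ^ k * (k * P k)) (z * D) := by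
      refine (hs.hasSum.mul_left z).congr_fun fun k => ?_
      rcases k with _ | k
      · simp
      · simp only [Nat.add_sub_cancel]
        ring
    have s3 : HasSum (fun k : ℕ => z ^ k * P k) (E z) := hGz ▸ hGs.hasSum
    have s4 : HasSum (fun k : ℕ => z ^ k * (if n ≤ k then P (k - n) else 0)) (z ^ n * E z) := by
      rw [← hasSum_nat_add_iff' n, Finset.sum_eq_zero, sub_zero]
      · refine (s3.mul_left (z ^ n)).congr_fun fun k => ?_
        simp [pow_add]
        ring
      · intro k hk
        simp [Finset.mem_range.1 hk]
    have s5 := ((s1.sub s2).sub (s3.mul_left θ)).add (s4.mul_left θ)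
    rw [hode] at s5
    refine s5.congr_fun fun k => ?_
    ring

/-- The coefficients `k! / (θ (θ + 1) ⋯ (θ + k))`. -/
noncomputable def invPochhammer (θ : ℝ) (k : ℕ) : ℝ :=
  k.factorial / ∏ j ∈ Finset.range (k + 1), (θ + j)

theorem invPochhammer_pos {θ : ℝ} (hθ : 0 < θ) (k : ℕ) : 0 < invPochhammer θ k := by
  unfold invPochhammer
  have : 0 < ∏ j ∈ Finset.range (k + 1), (θ + j) := Finset.prod_pos fun j _ => by positivity
  positivity

theorem invPochhammer_succ {θ : ℝ} (hθ : 0 < θ) (k : ℕ) :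
    invPochhammer θ (k + 1) * (θ + (k + 1 : ℕ)) = invPochhammer θ k * (k + 1) := by
  unfold invPochhammer
  have : 0 < ∏ j ∈ Finset.range (k + 1), (θ + j) := Finset.prod_pos fun j _ => by positivity
  have h2 : 0 < θ + (k + 1 : ℕ) := by positivity
  rw [Finset.prod_range_succ _ (k + 1), Nat.factorial_succ]
  field_simp
  push_cast
  ring

theorem invPochhammer_antitone {θ : ℝ} (hθ : 0 < θ) : Antitone (invPochhammer θ) := by
  refine antitone_nat_of_succ_le fun k => ?_
  have h1 := invPochhammer_succ hθ k
  have h2 := invPochhammer_pos hθ (k + 1)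
  have h3 : (0 : ℝ) < k + 1 := by positivity
  push_cast at h1
  nlinarith

/-- The lower bound `(k + 1) ^ (1 - θ) ≤ k! / (θ (θ + 1) ⋯ (θ + k - 1))`. -/
theorem rpow_le_invPochhammer_mul {θ : ℝ} (hθ : θ ∈ Ioc (0 : ℝ) 1) (k : ℕ) :
    ((k : ℝ) + 1) ^ (1 - θ) ≤ invPochhammer θ k * (θ + k) := by
  induction k with
  | zero => simp [invPochhammer, hθ.1.ne']
  | succ k ih =>
    rw [invPochhammer_succ hθ.1]
    have hk : (0 : ℝ) < k + 1 := by positivity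
    have hb := invPochhammer_pos hθ.1 k
    have hs : 0 ≤ 1 - θ := by linarith [hθ.2]
    have e1 : ((k + 1 : ℕ) : ℝ) + 1 = (k + 1) * (1 + 1 / (k + 1)) := by
      push_cast
      field_simp
    have h1 : (1 + 1 / ((k : ℝ) + 1)) ^ (1 - θ) ≤ 1 + (1 - θ) * (1 / (k + 1)) :=
      rpow_one_add_le_one_add_mul_self (by have : (0 : ℝ) ≤ 1 / (k + 1) := by positivity
                                           linarith) hs (by linarith [hθ.1])
    have h2 : (θ + k) * (1 + (1 - θ) * (1 / (k + 1))) ≤ k + 1 := by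
      have : (θ + k) * (1 + (1 - θ) * (1 / (k + 1))) = k + 1 - (1 - θ) ^ 2 / (k + 1) := by
        field_simp
        ring
      rw [this]
      have : 0 ≤ (1 - θ) ^ 2 / ((k : ℝ) + 1) := by positivity
      linarith
    rw [e1, Real.mul_rpow hk.le (by positivity)]
    calc _ ≤ invPochhammer θ k * (θ + k) * (1 + (1 - θ) * (1 / (k + 1))) := by
          refine mul_le_mul ih h1 (by positivity) ?_
          have := hθ.1
          positivity
      _ = invPochhammer θ k * ((θ + k) * (1 + (1 - θ) * (1 / (k + 1)))) := by ring
      _ ≤ _ := by gcongr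

theorem tendsto_rpow_mul_invPochhammer {θ y : ℝ} (hy : 0 < y) {r : ℕ → ℕ}
    (hr : Tendsto (fun n : ℕ => (r n : ℝ) / n) atTop (nhds y)) :
    Tendsto (fun n : ℕ => (n : ℝ) ^ θ * invPochhammer θ (r n)) atTop
      (nhds (Real.Gamma θ * y ^ (-θ))) := by
  have hr' : Tendsto (fun n => (r n : ℝ)) atTop atTop := by
    refine (hr.pos_mul_atTop hy tendsto_natCast_atTop_atTop).congr' ?_
    filter_upwards [eventually_gt_atTop 0] with n hn
    field_simp
  have h1 := (Real.GammaSeq_tendsto_Gamma θ).comp (tendsto_natCast_atTop_iff.1 hr')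
  have h2 := hr.rpow_const (p := -θ) (Or.inl hy.ne')
  refine (h1.mul h2).congr' ?_
  filter_upwards [eventually_gt_atTop 0, hr'.eventually_gt_atTop 0] with n hn hrn
  have hn' : (0 : ℝ) < n := Nat.cast_pos.2 hn
  have h3 : 0 < (r n : ℝ) ^ θ := Real.rpow_pos_of_pos hrn _
  simp only [Function.comp, Real.GammaSeq, invPochhammer]
  rw [Real.div_rpow hrn.le hn'.le, Real.rpow_neg hrn.le, Real.rpow_neg hn'.le]
  field_simp

theorem tendsto_rpow_mul_exp_harmonic (θ : ℝ) :
    Tendsto (fun n : ℕ => (n : ℝ) ^ θ * Real.exp (-(θ * harmonic n))) atTop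
      (nhds (Real.exp (-(Real.eulerMascheroniConstant * θ)))) := by
  have := (Real.continuous_exp.tendsto _).comp (Real.tendsto_harmonic_sub_log.mul_const θ).neg
  refine this.congr' ?_
  filter_upwards [eventually_gt_atTop 0] with n hn
  simp only [Function.comp]
  rw [Real.rpow_def_of_pos (Nat.cast_pos.2 hn), ← Real.exp_add]
  ring_nf

/-- Solving the recursion of `pgf_recurrence` by the integrating factor `invPochhammer`. -/
theorem invPochhammer_mul_eq {θ : ℝ} (hθ : 0 < θ) {P : ℕ → ℝ} {n : ℕ}
    (h : ∀ k : ℕ, (k + 1) * P (k + 1) = (k + θ) * P k - θ * (if n ≤ k then P (k - n) else 0))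
    (m : ℕ) :
    invPochhammer θ m * (θ + m) * P m =
      P 0 - θ * ∑ j ∈ Finset.range (m - n), invPochhammer θ (n + j) * P j := by
  induction m with
  | zero => simp [invPochhammer, hθ.ne']
  | succ m ih =>
    rw [invPochhammer_succ hθ]
    have h1 := h m
    by_cases hnm : n ≤ m
    · rw [if_pos hnm] at h1
      rw [Nat.succ_sub hnm, Finset.sum_range_succ, Nat.add_sub_cancel' hnm]
      linear_combination invPochhammer θ m * h1 + ih
    · rw [if_neg hnm] at h1
      rw [show m + 1 - n = 0 by omega]
      rw [show m - n = 0 by omega] at ih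
      linear_combination invPochhammer θ m * h1 + ih

theorem integral_natFloor (g : ℕ → ℝ) (N : ℕ) :
    ∫ t in (0 : ℝ)..N, g ⌊t⌋₊ = ∑ j ∈ Finset.range N, g j := by
  have hfl : ∀ j : ℕ, ∀ᵐ t : ℝ, t ∈ uIoc (j : ℝ) ((j + 1 : ℕ) : ℝ) → g j = g ⌊t⌋₊ := by
    intro j
    filter_upwards [compl_mem_ae_iff.2 (measure_singleton (((j + 1 : ℕ) : ℝ)))] with t ht htj
    rw [uIoc_of_le (by exact_mod_cast j.le_succ)] at htj
    have : ⌊t⌋₊ = j := by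
      rw [Nat.floor_eq_iff (le_trans (Nat.cast_nonneg _) htj.1.le)]
      exact ⟨htj.1.le, by exact_mod_cast lt_of_le_of_ne htj.2 ht⟩
    rw [this]
  have hint : ∀ j < N, IntervalIntegrable (fun t : ℝ => g ⌊t⌋₊) volume (j : ℝ) ((j + 1 : ℕ) : ℝ) := by
    intro j _
    refine (intervalIntegrable_const (c := g j)).congr_ae ?_
    exact (ae_restrict_iff' measurableSet_uIoc).2 (hfl j)
  have := intervalIntegral.sum_integral_adjacent_intervals hint
  rw [Nat.cast_zero] at this
  rw [← this]
  refine Finset.sum_congr rfl fun j _ => ?_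
  rw [← intervalIntegral.integral_congr_ae (hfl j)]
  simp

theorem mul_integral_natFloor_mul (g : ℕ → ℝ) {n : ℕ} (hn : 0 < n) (N : ℕ) :
    ∫ u in (0 : ℝ)..N / n, n * g ⌊n * u⌋₊ = ∑ j ∈ Finset.range N, g j := by
  have hn' : (n : ℝ) ≠ 0 := Nat.cast_ne_zero.2 hn.ne'
  rw [intervalIntegral.integral_const_mul,
    intervalIntegral.mul_integral_comp_mul_left (f := fun t : ℝ => g ⌊t⌋₊), mul_zero,
    mul_div_cancel₀ _ hn', integral_natFloor]

theorem coeff_le_of_recurrence {θ : ℝ} (hθ : θ ∈ Ioc (0 : ℝ) 1) {P : ℕ → ℝ} (hP : ∀ k, 0 ≤ P k)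
    {n : ℕ}
    (h : ∀ k : ℕ, (k + 1) * P (k + 1) = (k + θ) * P k - θ * (if n ≤ k then P (k - n) else 0))
    (m : ℕ) : P m ≤ P 0 * ((m : ℝ) + 1) ^ (θ - 1) := by
  have h1 := invPochhammer_mul_eq hθ.1 h m
  have h2 : 0 ≤ ∑ j ∈ Finset.range (m - n), invPochhammer θ (n + j) * P j :=
    Finset.sum_nonneg fun j _ => mul_nonneg (invPochhammer_pos hθ.1 _).le (hP j)
  have h3 := rpow_le_invPochhammer_mul hθ m
  have hm : (0 : ℝ) < m + 1 := by positivity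
  have h4 : ((m : ℝ) + 1) ^ (1 - θ) * P m ≤ P 0 := by
    have := mul_le_mul_of_nonneg_right h3 (hP m)
    have := mul_nonneg hθ.1.le h2
    linarith
  have h5 : 0 < ((m : ℝ) + 1) ^ (1 - θ) := Real.rpow_pos_of_pos hm _
  rw [show θ - 1 = -(1 - θ) by ring, Real.rpow_neg hm.le, ← div_eq_mul_inv, le_div_iff₀ h5]
  linarith

section LocalLimit

variable {θ : ℝ} {P : ℕ → ℕ → ℝ} {p : ℝ → ℝ}

theorem tendsto_floor_mul_div {u : ℝ} (hu : 0 ≤ u) :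
    Tendsto (fun n : ℕ => (⌊(n : ℝ) * u⌋₊ : ℝ) / n) atTop (nhds u) := by
  refine ((tendsto_nat_floor_mul_div_atTop hu).comp tendsto_natCast_atTop_atTop).congr fun n => ?_
  simp [mul_comm]

theorem tendsto_integratingFactor_mul {y : ℝ} (hy : 0 < y) {r : ℕ → ℕ}
    (hr : Tendsto (fun n : ℕ => (r n : ℝ) / n) atTop (nhds y))
    (hp : Tendsto (fun n : ℕ => n * P n (r n)) atTop (nhds (p y))) :
    Tendsto (fun n : ℕ => (n : ℝ) ^ θ * (invPochhammer θ (r n) * (θ + r n) * P n (r n))) atTop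
      (nhds (Real.Gamma θ * y ^ (1 - θ) * p y)) := by
  have h1 := tendsto_rpow_mul_invPochhammer (θ := θ) hy hr
  have h2 := (tendsto_const_div_atTop_nhds_zero_nat θ).add hr
  have h3 := (h1.mul h2).mul hp
  rw [show Real.Gamma θ * y ^ (-θ) * (0 + y) * p y = Real.Gamma θ * y ^ (1 - θ) * p y by
    rw [show 1 - θ = -θ + 1 by ring, Real.rpow_add_one hy.ne']
    ring] at h3
  refine h3.congr' ?_
  filter_upwards [eventually_gt_atTop 0] with n hn
  have hn' : (0 : ℝ) < n := Nat.cast_pos.2 hn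
  field_simp

/-- The limit density on `(0, 1]`. -/
theorem limit_density_of_le_one (hθ : 0 < θ)
    (h0 : ∀ n, 1 ≤ n → P n 0 = Real.exp (-(θ * harmonic n)))
    (hrec : ∀ n, 1 ≤ n → ∀ k : ℕ,
      (k + 1) * P n (k + 1) = (k + θ) * P n k - θ * (if n ≤ k then P n (k - n) else 0))
    (hp : ∀ y : ℝ, 0 < y → ∀ r : ℕ → ℕ, Tendsto (fun n : ℕ => (r n : ℝ) / n) atTop (nhds y) →
      Tendsto (fun n : ℕ => n * P n (r n)) atTop (nhds (p y)))
    {y : ℝ} (hy : y ∈ Ioc (0 : ℝ) 1) :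
    Real.Gamma θ * y ^ (1 - θ) * p y = Real.exp (-(Real.eulerMascheroniConstant * θ)) := by
  have hr := tendsto_floor_mul_div hy.1.le
  refine tendsto_nhds_unique (tendsto_integratingFactor_mul (θ := θ) hy.1 hr (hp y hy.1 _ hr))
    ((tendsto_rpow_mul_exp_harmonic θ).congr' ?_)
  filter_upwards [eventually_ge_atTop 1] with n hn
  have hle : ⌊(n : ℝ) * y⌋₊ ≤ n :=
    Nat.floor_le_of_le (mul_le_of_le_one_right (Nat.cast_nonneg n) hy.2)
  rw [invPochhammer_mul_eq hθ (hrec n hn), Nat.sub_eq_zero_of_le hle, h0 n hn]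
  simp

/-- The integrated delay differential equation for the limit density on `(1, ∞)`. -/
theorem limit_density_integral_eq (hθ : θ ∈ Ioc (0 : ℝ) 1) (hP : ∀ n k, 0 ≤ P n k)
    (h0 : ∀ n, 1 ≤ n → P n 0 = Real.exp (-(θ * harmonic n)))
    (hrec : ∀ n, 1 ≤ n → ∀ k : ℕ,
      (k + 1) * P n (k + 1) = (k + θ) * P n k - θ * (if n ≤ k then P n (k - n) else 0))
    (hp : ∀ y : ℝ, 0 < y → ∀ r : ℕ → ℕ, Tendsto (fun n : ℕ => (r n : ℝ) / n) atTop (nhds y) →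
      Tendsto (fun n : ℕ => n * P n (r n)) atTop (nhds (p y)))
    {w : ℝ} (hw : 0 < w) :
    Real.Gamma θ * (1 + w) ^ (1 - θ) * p (1 + w) =
      Real.exp (-(Real.eulerMascheroniConstant * θ)) -
        θ * ∫ u in (0 : ℝ)..w, Real.Gamma θ * (1 + u) ^ (-θ) * p u := by
  have hshift : ∀ u : ℝ, 0 ≤ u → Tendsto (fun n : ℕ => ((n + ⌊(n : ℝ) * u⌋₊ : ℕ) : ℝ) / n) atTop
      (nhds (1 + u)) := by
    intro u hu
    refine ((tendsto_floor_mul_div hu).const_add 1).congr' ?_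
    filter_upwards [eventually_gt_atTop 0] with n hn
    have hn' : (0 : ℝ) < n := Nat.cast_pos.2 hn
    push_cast
    field_simp
  have hPlim : Tendsto (fun n : ℕ => (n : ℝ) ^ θ * P n 0) atTop
      (nhds (Real.exp (-(Real.eulerMascheroniConstant * θ)))) := by
    refine (tendsto_rpow_mul_exp_harmonic θ).congr' ?_
    filter_upwards [eventually_ge_atTop 1] with n hn
    rw [h0 n hn]
  obtain ⟨K, hK⟩ := hPlim.bddAbove_range
  have hblim := tendsto_rpow_mul_invPochhammer (θ := θ) (r := id) one_pos
    (tendsto_const_nhds.congr' (by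
      filter_upwards [eventually_gt_atTop 0] with n hn
      exact (div_self (Nat.cast_ne_zero.2 hn.ne')).symm))
  obtain ⟨M, hM⟩ := hblim.bddAbove_range
  have hK' : ∀ n : ℕ, (n : ℝ) ^ θ * P n 0 ≤ K := fun n => hK ⟨n, rfl⟩
  have hM' : ∀ n : ℕ, (n : ℝ) ^ θ * invPochhammer θ n ≤ M := fun n => hM ⟨n, rfl⟩
  set f : ℕ → ℝ → ℝ := fun n u =>
    n * ((n : ℝ) ^ θ * (invPochhammer θ (n + ⌊(n : ℝ) * u⌋₊) * P n ⌊(n : ℝ) * u⌋₊)) with hf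
  set F : ℕ → ℝ → ℝ := fun n =>
    indicator {u | u ≤ (⌊(n : ℝ) * w⌋₊ : ℝ) / n} (f n) with hF
  have hFint : ∀ n : ℕ, 0 < n → ∫ u in (0 : ℝ)..w, F n u =
      (n : ℝ) ^ θ * ∑ j ∈ Finset.range ⌊(n : ℝ) * w⌋₊, invPochhammer θ (n + j) * P n j := by
    intro n hn
    have hn' : (0 : ℝ) < n := Nat.cast_pos.2 hn
    rw [hF, intervalIntegral.integral_indicator, Finset.mul_sum,
      ← mul_integral_natFloor_mul (fun j => (n : ℝ) ^ θ * (invPochhammer θ (n + j) * P n j)) hn]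
    refine ⟨by positivity, ?_⟩
    rw [div_le_iff₀ hn', mul_comm w]
    exact Nat.floor_le (by positivity)
  have hfmeas : ∀ n, Measurable (f n) := by
    intro n
    have hfl : Measurable fun u : ℝ => ⌊(n : ℝ) * u⌋₊ :=
      Nat.measurable_floor.comp (measurable_const.mul measurable_id)
    exact (measurable_from_nat (f := fun j : ℕ =>
      (n : ℝ) * ((n : ℝ) ^ θ * (invPochhammer θ (n + j) * P n j)))).comp hfl
  have hfnn : ∀ n u, 0 ≤ f n u := fun n u => by
    have := (invPochhammer_pos hθ.1 (n + ⌊(n : ℝ) * u⌋₊)).le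
    have := hP n ⌊(n : ℝ) * u⌋₊
    positivity
  have hbound : ∀ n : ℕ, 0 < n → ∀ u : ℝ, 0 < u → f n u ≤ M * (K * u ^ (θ - 1)) := by
    intro n hn u hu
    have hn' : (0 : ℝ) < n := Nat.cast_pos.2 hn
    set j := ⌊(n : ℝ) * u⌋₊ with hj
    have h1 : (n : ℝ) ^ θ * invPochhammer θ (n + j) ≤ M :=
      le_trans (mul_le_mul_of_nonneg_left (invPochhammer_antitone hθ.1 (Nat.le_add_right n j))
        (by positivity)) (hM' n)
    have h2 : n * P n j ≤ K * u ^ (θ - 1) := by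
      have h3 := coeff_le_of_recurrence hθ (hP n) (hrec n hn) j
      have h4 : ((j : ℝ) + 1) ^ (θ - 1) ≤ (n * u) ^ (θ - 1) :=
        Real.rpow_le_rpow_of_nonpos (by positivity) (Nat.lt_floor_add_one _).le
          (by linarith [hθ.2])
      calc n * P n j ≤ n * (P n 0 * (n * u) ^ (θ - 1)) :=
            mul_le_mul_of_nonneg_left (h3.trans (mul_le_mul_of_nonneg_left h4 (hP n 0))) hn'.le
        _ = n ^ θ * P n 0 * u ^ (θ - 1) := by
            rw [Real.mul_rpow hn'.le hu.le, Real.rpow_sub_one hn'.ne']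
            field_simp
        _ ≤ _ := mul_le_mul_of_nonneg_right (hK' n) (by positivity)
    have hb := invPochhammer_pos hθ.1 (n + j)
    calc f n u = (n : ℝ) ^ θ * invPochhammer θ (n + j) * (n * P n j) := by
          simp only [hf, ← hj]
          ring
      _ ≤ _ := mul_le_mul h1 h2 (mul_nonneg hn'.le (hP n j)) (le_trans (by positivity) h1)
  have hflim : ∀ u : ℝ, 0 < u →
      Tendsto (fun n => f n u) atTop (nhds (Real.Gamma θ * (1 + u) ^ (-θ) * p u)) := by
    intro u hu
    have h1 := tendsto_rpow_mul_invPochhammer (θ := θ) (by linarith : 0 < 1 + u) (hshift u hu.le)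
    refine (h1.mul (hp u hu _ (tendsto_floor_mul_div hu.le))).congr fun n => ?_
    simp only [hf]
    ring
  have hFlim : Tendsto (fun n => ∫ u in (0 : ℝ)..w, F n u) atTop
      (nhds (∫ u in (0 : ℝ)..w, Real.Gamma θ * (1 + u) ^ (-θ) * p u)) := by
    refine intervalIntegral.tendsto_integral_filter_of_dominated_convergence
      (fun u => M * (K * u ^ (θ - 1))) ?_ ?_ ?_ ?_
    · exact Eventually.of_forall fun n =>
        ((hfmeas n).indicator measurableSet_Iic).aestronglyMeasurable
    · filter_upwards [eventually_gt_atTop 0] with n hn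
      refine Eventually.of_forall fun u hu => ?_
      rw [uIoc_of_le hw.le] at hu
      rw [Real.norm_of_nonneg (indicator_nonneg (fun u _ => hfnn n u) u)]
      exact (indicator_le_self' (fun u _ => hfnn n u) u).trans (hbound n hn u hu.1)
    · exact ((intervalIntegral.intervalIntegrable_rpow' (by linarith [hθ.1])).const_mul K).const_mul M
    · filter_upwards [compl_mem_ae_iff.2 (measure_singleton w)] with u huw hu
      rw [uIoc_of_le hw.le] at hu
      refine (hflim u hu.1).congr' ?_
      filter_upwards [(tendsto_floor_mul_div hw.le).eventually_const_lt
        (lt_of_le_of_ne hu.2 huw)] with n hn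
      exact (indicator_of_mem (s := {u | u ≤ (⌊(n : ℝ) * w⌋₊ : ℝ) / n}) hn.le (f n)).symm
  have hw1 : 0 < 1 + w := by linarith
  refine tendsto_nhds_unique
    (tendsto_integratingFactor_mul (θ := θ) hw1 (hshift w hw.le) (hp _ hw1 _ (hshift w hw.le)))
    ((hPlim.sub (hFlim.const_mul θ)).congr' ?_)
  filter_upwards [eventually_ge_atTop 1] with n hn
  rw [invPochhammer_mul_eq hθ.1 (hrec n hn), hFint n hn, Nat.add_sub_cancel_left]
  ring

end LocalLimit

/-- With `p_θ` the limiting density of `T_{0n}/n` for the Ewens model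
(`T_{0n} = ∑ j Z_j`, `Z_j` independent Poisson(θ/j), characterized by the local limit
`n P(T_{0n} = r_n) → p_θ(y)` when `r_n/n → y`), and `P(L^{(∞)} ≤ x) = F_θ(x) =
e^{γθ} x^{θ-1} Γ(θ) p_θ(1/x)` on `(0,1]` (and `= 1` for `x ≥ 1`) the Kingman limiting
longest-cycle law, the constant
`C_δ = θ ∫_δ^1 (1−x)^{θ-1} P(L^{(∞)} ≤ x/(1−x)) dx/x` equals
`1 − Γ(θ) e^{γθ} δ^{θ-1} p_θ(1/δ)` for `0 < δ < 1`. -/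
theorem Cdelta_identity (θ : ℝ) (hθ : θ ∈ Set.Ioc (0 : ℝ) 1)
    (μT : ℕ → Measure ℕ) (hprob : ∀ n, IsProbabilityMeasure (μT n))
    (hpgf : ∀ n : ℕ, 1 ≤ n → ∀ z ∈ Set.Ioc (0 : ℝ) 1,
      ∑' k : ℕ, z ^ k * (μT n {k}).toReal
        = ∏ j ∈ Finset.Icc 1 n, Real.exp ((θ / j) * (z ^ j - 1)))
    (p : ℝ → ℝ)
    (hp : ∀ y : ℝ, 0 < y → ∀ r : ℕ → ℕ,
      Tendsto (fun n : ℕ => (r n : ℝ) / n) atTop (nhds y) →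
      Tendsto (fun n : ℕ => (n : ℝ) * (μT n {r n}).toReal) atTop (nhds (p y)))
    (PL : ℝ → ℝ)
    (hPL₁ : ∀ x ∈ Set.Ioc (0 : ℝ) 1,
      PL x = Real.exp (Real.eulerMascheroniConstant * θ) * x ^ (θ - 1) *
        Real.Gamma θ * p (1 / x))
    (hPL₂ : ∀ x : ℝ, 1 ≤ x → PL x = 1)
    (δ : ℝ) (hδ : δ ∈ Set.Ioo (0 : ℝ) 1) :
    θ * ∫ x in δ..1, (1 - x) ^ (θ - 1) * PL (x / (1 - x)) / x
      = 1 - Real.Gamma θ * Real.exp (Real.eulerMascheroniConstant * θ) *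
          δ ^ (θ - 1) * p (1 / δ) := by
  obtain ⟨hδ0, hδ1⟩ := hδ
  set P : ℕ → ℕ → ℝ := fun n k => (μT n {k}).toReal with hPdef
  have hP0 : ∀ n k, 0 ≤ P n k := fun n k => ENNReal.toReal_nonneg
  have hP1 : ∀ n k, |P n k| ≤ 1 := by
    intro n k
    rw [abs_of_nonneg (hP0 n k)]
    exact measureReal_le_one
  have h0 : ∀ n, 1 ≤ n → P n 0 = Real.exp (-(θ * harmonic n)) :=
    fun n hn => (pgf_recurrence (hP1 n) (hpgf n hn)).1
  have hrec : ∀ n, 1 ≤ n → ∀ k : ℕ,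
      (k + 1) * P n (k + 1) = (k + θ) * P n k - θ * (if n ≤ k then P n (k - n) else 0) :=
    fun n hn => (pgf_recurrence (hP1 n) (hpgf n hn)).2
  set C := Real.exp (Real.eulerMascheroniConstant * θ) with hC
  have hCC : C * Real.exp (-(Real.eulerMascheroniConstant * θ)) = 1 := by
    rw [hC, ← Real.exp_add, add_neg_cancel, Real.exp_zero]
  have hPL : ∀ t : ℝ, 0 < t → PL t = C * t ^ (θ - 1) * Real.Gamma θ * p (1 / t) := by
    intro t ht
    rcases le_total t 1 with h | h
    · exact hPL₁ t ⟨ht, h⟩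
    · have h1 := limit_density_of_le_one hθ.1 h0 hrec hp (y := 1 / t)
        ⟨by positivity, (div_le_one ht).2 h⟩
      rw [one_div, Real.inv_rpow ht.le, ← Real.rpow_neg ht.le, neg_sub] at h1
      rw [hPL₂ t h, one_div]
      linear_combination -hCC - C * h1
  have hw : 0 < 1 / δ - 1 := by
    rw [sub_pos, lt_div_iff₀ hδ0]
    linarith
  have hkey := limit_density_integral_eq hθ hP0 h0 hrec hp hw
  have himage : (fun x : ℝ => 1 / x - 1) '' Ioo δ 1 = Ioo 0 (1 / δ - 1) := by
    ext u
    constructor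
    · rintro ⟨x, ⟨h1, h2⟩, rfl⟩
      have hx : 0 < x := hδ0.trans h1
      exact ⟨sub_pos.2 ((one_lt_div hx).2 h2), sub_lt_sub_right (one_div_lt_one_div_of_lt hδ0 h1) 1⟩
    · rintro ⟨h1, h2⟩
      have hu : 0 < 1 + u := by linarith
      refine ⟨1 / (1 + u), ⟨?_, ?_⟩, ?_⟩
      · rw [lt_one_div hδ0 hu]
        linarith
      · rw [div_lt_one hu]
        linarith
      · simp
  have hsubst := integral_image_eq_integral_abs_deriv_smul (s := Ioo δ 1)
    (f := fun x : ℝ => 1 / x - 1) (f' := fun x => -(x ^ 2)⁻¹) measurableSet_Ioo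
    (fun x hx => by
      simpa [one_div] using ((hasDerivAt_inv (hδ0.trans hx.1).ne').sub_const 1).hasDerivWithinAt)
    (fun x _ y _ hxy => by simpa using hxy)
    (fun u => Real.Gamma θ * (1 + u) ^ (-θ) * p u)
  rw [himage] at hsubst
  have hI : ∫ x in δ..1, (1 - x) ^ (θ - 1) * PL (x / (1 - x)) / x =
      C * ∫ u in (0 : ℝ)..(1 / δ - 1), Real.Gamma θ * (1 + u) ^ (-θ) * p u := by
    rw [intervalIntegral.integral_of_le hδ1.le, intervalIntegral.integral_of_le hw.le,
      integral_Ioc_eq_integral_Ioo, integral_Ioc_eq_integral_Ioo, hsubst, ← integral_const_mul]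
    refine setIntegral_congr_fun measurableSet_Ioo fun x hx => ?_
    have hx0 : 0 < x := hδ0.trans hx.1
    have hx1 : 0 < 1 - x := sub_pos.2 hx.2
    have hpow : 0 < (1 - x) ^ (θ - 1) := Real.rpow_pos_of_pos hx1 _
    have hu : 1 / (x / (1 - x)) = 1 / x - 1 := by
      field_simp
    simp only [smul_eq_mul]
    rw [hPL _ (div_pos hx0 hx1), hu, add_sub_cancel, abs_neg, abs_of_pos (by positivity), one_div x,
      Real.inv_rpow hx0.le, Real.rpow_neg hx0.le, inv_inv, Real.div_rpow hx0.le hx1.le,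
      Real.rpow_sub_one hx0.ne']
    field_simp
  rw [hI]
  rw [add_sub_cancel, one_div, Real.inv_rpow hδ0.le, ← Real.rpow_neg hδ0.le, neg_sub] at hkey
  rw [one_div]
  linear_combination hCC + C * hkey
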